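/- Let R = Q/𝔟₁ where 𝔟₁ = (x³, x²y, yz², z³) ⊆ Q. Then the socle (0 :_R 𝔪) of R is equal to the R-submodule generated by the image of x²z², and its dimension as a k-vector space is 1 (that is, R has type 1). -/

import Mathlib

/-!
All the ideals involved are monomial, so membership can be read off from coefficients: a power
series lies in `Ib1 k` exactly when it is supported on exponents divisible by one of the four
generators (`mem_Ib1_iff`). The only exponent outside this set all of whose three successors lie
in it is `(2, 0, 2)`, since an exponent outside the set with positive `y`-exponent stays outside
it after multiplication by `y`. Hence a series killed by `x`, `y` and `z` modulo `Ib1 k`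
is congruent to `c x² z²` with `c` its coefficient at `(2, 0, 2)`, and `x² z²` itself is not in
`Ib1 k`.
-/

noncomputable section

/-- The variable `x` in `Q = k[[x,y,z]]`. -/
def xx (k : Type*) [Field k] : MvPowerSeries (Fin 3) k := MvPowerSeries.X 0
/-- The variable `y` in `Q = k[[x,y,z]]`. -/
def yy (k : Type*) [Field k] : MvPowerSeries (Fin 3) k := MvPowerSeries.X 1
/-- The variable `z` in `Q = k[[x,y,z]]`. -/
def zz (k : Type*) [Field k] : MvPowerSeries (Fin 3) k := MvPowerSeries.X 2

/-- The ideal `b1` of the paper. -/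
def Ib1 (k : Type*) [Field k] : Ideal (MvPowerSeries (Fin 3) k) :=
  Ideal.span {xx k ^ 3, xx k ^ 2 * yy k, yy k * zz k ^ 2, zz k ^ 3}

/-- The exponents of the monomials lying in `Ib1 k`. -/
def InB1 (d : Fin 3 →₀ ℕ) : Prop :=
  3 ≤ d 0 ∨ (2 ≤ d 0 ∧ 1 ≤ d 1) ∨ (1 ≤ d 1 ∧ 2 ≤ d 2) ∨ 3 ≤ d 2

/-- The exponent of the monomial `x ^ a * y ^ b * z ^ c`. -/
def expo (a b c : ℕ) : Fin 3 →₀ ℕ :=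
  Finsupp.single 0 a + Finsupp.single 1 b + Finsupp.single 2 c

lemma expo_le_iff (a b c : ℕ) (d : Fin 3 →₀ ℕ) :
    expo a b c ≤ d ↔ a ≤ d 0 ∧ b ≤ d 1 ∧ c ≤ d 2 := by
  rw [Finsupp.le_def, Fin.forall_fin_succ, Fin.forall_fin_succ, Fin.forall_fin_succ]
  simp [expo, Finsupp.single_apply]

lemma monomial_expo (k : Type*) [Field k] (a b c : ℕ) :
    MvPowerSeries.monomial (expo a b c) (1 : k) = xx k ^ a * yy k ^ b * zz k ^ c := by
  simp [xx, yy, zz, MvPowerSeries.X_pow_eq, MvPowerSeries.monomial_mul_monomial, expo]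

/-- The part of `f` supported on the exponents satisfying `p`. -/
def restr {k : Type*} [Field k] (p : (Fin 3 →₀ ℕ) → Prop) (f : MvPowerSeries (Fin 3) k) :
    MvPowerSeries (Fin 3) k :=
  open Classical in fun d => if p d then MvPowerSeries.coeff d f else 0

open Classical in
lemma coeff_restr {k : Type*} [Field k] (p : (Fin 3 →₀ ℕ) → Prop) (f : MvPowerSeries (Fin 3) k)
    (d : Fin 3 →₀ ℕ) :
    MvPowerSeries.coeff d (restr p f) = if p d then MvPowerSeries.coeff d f else 0 := rfl

lemma monomial_dvd {k : Type*} [Field k] (s : Fin 3 →₀ ℕ) (f : MvPowerSeries (Fin 3) k)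
    (h : ∀ d, ¬ s ≤ d → MvPowerSeries.coeff d f = 0) :
    MvPowerSeries.monomial s (1 : k) ∣ f := by
  classical
  let g : MvPowerSeries (Fin 3) k := fun d => MvPowerSeries.coeff (s + d) f
  have hg : ∀ d, MvPowerSeries.coeff d g = MvPowerSeries.coeff (s + d) f := fun _ => rfl
  refine ⟨g, ?_⟩
  ext d
  rw [MvPowerSeries.coeff_monomial_mul]
  split_ifs with hd
  · rw [one_mul, hg, add_tsub_cancel_of_le hd]
  · exact h d hd

/-- An ideal containing a finite set of monomials contains every power series supported on
multiples of them: split off the part supported on the multiples of one monomial at a time. -/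
lemma mem_of_support {k : Type*} [Field k] (I : Ideal (MvPowerSeries (Fin 3) k))
    (S : List (Fin 3 →₀ ℕ)) (hS : ∀ s ∈ S, MvPowerSeries.monomial s (1 : k) ∈ I)
    (f : MvPowerSeries (Fin 3) k)
    (hf : ∀ d, (∀ s ∈ S, ¬ s ≤ d) → MvPowerSeries.coeff d f = 0) : f ∈ I := by
  classical
  induction S generalizing f with
  | nil =>
    have : f = 0 := by
      ext d
      simpa using hf d (by simp)
    simp [this]
  | cons s S ih =>
    have hsplit : f = restr (fun d => s ≤ d) f + restr (fun d => ¬ s ≤ d) f := by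
      ext d
      rw [map_add, coeff_restr, coeff_restr]
      by_cases h : s ≤ d <;> simp [h]
    rw [hsplit]
    refine I.add_mem (I.mem_of_dvd (monomial_dvd s _ fun d hd => ?_) (hS s (by simp))) ?_
    · simp [coeff_restr, hd]
    · refine ih (fun t ht => hS t (by simp [ht])) _ fun d hd => ?_
      rw [coeff_restr]
      split_ifs with h
      · rfl
      · refine hf d fun t ht => ?_
        rcases List.mem_cons.1 ht with rfl | ht
        exacts [h, hd t ht]

lemma mem_Ib1_iff {k : Type*} [Field k] (f : MvPowerSeries (Fin 3) k) :
    f ∈ Ib1 k ↔ ∀ d, ¬ InB1 d → MvPowerSeries.coeff d f = 0 := by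
  classical
  have e1 : xx k ^ 3 = MvPowerSeries.monomial (expo 3 0 0) (1 : k) := by simp [monomial_expo]
  have e2 : xx k ^ 2 * yy k = MvPowerSeries.monomial (expo 2 1 0) (1 : k) := by
    simp [monomial_expo]
  have e3 : yy k * zz k ^ 2 = MvPowerSeries.monomial (expo 0 1 2) (1 : k) := by
    simp [monomial_expo]
  have e4 : zz k ^ 3 = MvPowerSeries.monomial (expo 0 0 3) (1 : k) := by simp [monomial_expo]
  constructor
  · intro hf
    refine Submodule.span_induction ?_ ?_ ?_ ?_ hf
    · intro g hg d hd
      simp only [e1, e2, e3, e4, Set.mem_insert_iff, Set.mem_singleton_iff] at hg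
      rcases hg with rfl | rfl | rfl | rfl <;>
      · rw [MvPowerSeries.coeff_monomial, if_neg]
        rintro rfl
        apply hd
        simp [InB1, expo]
    · simp
    · intro a b _ _ ha hb d hd
      rw [map_add, ha d hd, hb d hd, add_zero]
    · intro a b _ hb d hd
      rw [smul_eq_mul, MvPowerSeries.coeff_mul]
      refine Finset.sum_eq_zero fun p hp => ?_
      rw [hb, mul_zero]
      rw [Finset.HasAntidiagonal.mem_antidiagonal] at hp
      subst hp
      simp only [InB1, Finsupp.add_apply] at hd ⊢
      omega
  · intro h
    refine mem_of_support _ [expo 3 0 0, expo 2 1 0, expo 0 1 2, expo 0 0 3] ?_ f fun d hd => ?_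
    · intro s hs
      simp only [List.mem_cons, List.not_mem_nil, or_false] at hs
      rcases hs with rfl | rfl | rfl | rfl
      · exact e1 ▸ Ideal.subset_span (by simp)
      · exact e2 ▸ Ideal.subset_span (by simp)
      · exact e3 ▸ Ideal.subset_span (by simp)
      · exact e4 ▸ Ideal.subset_span (by simp)
    · apply h
      simp only [List.forall_mem_cons, expo_le_iff] at hd
      simp only [InB1]
      omega

lemma coeff_X_mul' {k : Type*} [Field k] (i : Fin 3) (d : Fin 3 →₀ ℕ)
    (f : MvPowerSeries (Fin 3) k) :
    MvPowerSeries.coeff (Finsupp.single i 1 + d) (MvPowerSeries.X i * f)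
      = MvPowerSeries.coeff d f := by
  rw [MvPowerSeries.X_def, MvPowerSeries.coeff_add_monomial_mul, one_mul]

/-- A series killed by the three variables modulo `Ib1 k` is a scalar multiple of `x² z²`
modulo `Ib1 k`. -/
lemma sub_mem_of_killed {k : Type*} [Field k] (f : MvPowerSeries (Fin 3) k)
    (hx : xx k * f ∈ Ib1 k) (hy : yy k * f ∈ Ib1 k) (hz : zz k * f ∈ Ib1 k) :
    f - MvPowerSeries.coeff (expo 2 0 2) f • (xx k ^ 2 * zz k ^ 2) ∈ Ib1 k := by
  classical
  have e : xx k ^ 2 * zz k ^ 2 = MvPowerSeries.monomial (expo 2 0 2) (1 : k) := by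
    simp [monomial_expo]
  rw [mem_Ib1_iff] at hx hy hz ⊢
  intro d hd
  rw [e, map_sub, map_smul, MvPowerSeries.coeff_monomial]
  split_ifs with h
  · simp [h]
  · rw [smul_zero, sub_zero]
    have hne : ¬ (d 0 = 2 ∧ d 1 = 0 ∧ d 2 = 2) := by
      rintro ⟨h0, h1, h2⟩
      apply h
      ext i
      fin_cases i <;> simp [expo, h0, h1, h2]
    -- Multiply by `y` if `y` occurs, and otherwise by whichever of `x`, `z` has exponent below `2`.
    by_cases h1 : 1 ≤ d 1
    · rw [← coeff_X_mul' 1]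
      apply hy
      simp [InB1] at hd ⊢
      omega
    · by_cases h0 : d 0 < 2
      · rw [← coeff_X_mul' 0]
        apply hx
        simp [InB1] at hd ⊢
        omega
      · rw [← coeff_X_mul' 2]
        apply hz
        simp [InB1] at hd ⊢
        omega

lemma sq_mul_sq_notMem (k : Type*) [Field k] : xx k ^ 2 * zz k ^ 2 ∉ Ib1 k := by
  classical
  have e : xx k ^ 2 * zz k ^ 2 = MvPowerSeries.monomial (expo 2 0 2) (1 : k) := by
    simp [monomial_expo]
  rw [mem_Ib1_iff, e]
  intro h
  have := h (expo 2 0 2) (by simp [InB1, expo])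
  simp at this

lemma mk_mem_socle_iff {k : Type*} [Field k] (f : MvPowerSeries (Fin 3) k) :
    Ideal.Quotient.mk (Ib1 k) f ∈ (⊥ : Ideal (MvPowerSeries (Fin 3) k ⧸ Ib1 k)).colon
        (Ideal.map (Ideal.Quotient.mk (Ib1 k)) (Ideal.span {xx k, yy k, zz k})) ↔
      xx k * f ∈ Ib1 k ∧ yy k * f ∈ Ib1 k ∧ zz k * f ∈ Ib1 k := by
  rw [Ideal.map_span, Ideal.span, Submodule.colon_span, Submodule.mem_colon]
  simp [Set.image_insert_eq, ← map_mul, Ideal.Quotient.eq_zero_iff_mem, mul_comm f]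

lemma mk_sq_mul_sq_mem_socle (k : Type*) [Field k] :
    Ideal.Quotient.mk (Ib1 k) (xx k ^ 2 * zz k ^ 2) ∈
      (⊥ : Ideal (MvPowerSeries (Fin 3) k ⧸ Ib1 k)).colon
        (Ideal.map (Ideal.Quotient.mk (Ib1 k)) (Ideal.span {xx k, yy k, zz k})) := by
  rw [mk_mem_socle_iff]
  refine ⟨?_, ?_, ?_⟩
  · exact (Ib1 k).mem_of_dvd (a := xx k ^ 3) ⟨zz k ^ 2, by ring⟩ (Ideal.subset_span (by simp))
  · exact (Ib1 k).mem_of_dvd (a := xx k ^ 2 * yy k) ⟨zz k ^ 2, by ring⟩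
      (Ideal.subset_span (by simp))
  · exact (Ib1 k).mem_of_dvd (a := zz k ^ 3) ⟨xx k ^ 2, by ring⟩ (Ideal.subset_span (by simp))

lemma exists_smul_eq_of_mem_socle {k : Type*} [Field k] (w : MvPowerSeries (Fin 3) k ⧸ Ib1 k)
    (hw : w ∈ (⊥ : Ideal (MvPowerSeries (Fin 3) k ⧸ Ib1 k)).colon
        (Ideal.map (Ideal.Quotient.mk (Ib1 k)) (Ideal.span {xx k, yy k, zz k}))) :
    ∃ c : k, c • Ideal.Quotient.mk (Ib1 k) (xx k ^ 2 * zz k ^ 2) = w := by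
  obtain ⟨f, rfl⟩ := Ideal.Quotient.mk_surjective w
  obtain ⟨hx, hy, hz⟩ := (mk_mem_socle_iff f).1 hw
  exact ⟨_, (Ideal.Quotient.eq.2 (sub_mem_of_killed f hx hy hz)).symm⟩

/-- The socle `(0 :_R m)` of `R = Q/b1`. -/
theorem socle_b1 (k : Type*) [Field k] :
    (⊥ : Ideal (MvPowerSeries (Fin 3) k ⧸ Ib1 k)).colon
        (Ideal.map (Ideal.Quotient.mk (Ib1 k)) (Ideal.span {xx k, yy k, zz k}))
      = Ideal.span {Ideal.Quotient.mk (Ib1 k) (xx k ^ 2 * zz k ^ 2)} ∧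
    Module.finrank k (Submodule.restrictScalars k
      ((⊥ : Ideal (MvPowerSeries (Fin 3) k ⧸ Ib1 k)).colon
        (Ideal.map (Ideal.Quotient.mk (Ib1 k)) (Ideal.span {xx k, yy k, zz k})))) = 1 := by
  refine ⟨le_antisymm (fun w hw => ?_) ?_, ?_⟩
  · obtain ⟨c, rfl⟩ := exists_smul_eq_of_mem_socle w hw
    exact Submodule.smul_of_tower_mem _ c (Ideal.mem_span_singleton_self _)
  · rw [Ideal.span_singleton_le_iff_mem]
    exact mk_sq_mul_sq_mem_socle k
  · refine finrank_eq_one ⟨_, mk_sq_mul_sq_mem_socle k⟩ ?_ ?_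
    · intro h
      exact sq_mul_sq_notMem k (Ideal.Quotient.eq_zero_iff_mem.1 (congrArg Subtype.val h))
    · rintro ⟨w, hw⟩
      obtain ⟨c, hc⟩ := exists_smul_eq_of_mem_socle w hw
      exact ⟨c, Subtype.ext hc⟩
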